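/- arXiv:1107.4879 — 6 statements merged into one kernel-verified Lean document; each statement's English description precedes it below -/
import Mathlib

section
/- If a graph G has a spanning k-edge-colorable subgraph, then G has a subgraph that is simultaneously spanning and a maximum k-edge-colorable subgraph of G. -/
/-!
Let `S` be the edge set of a `k`-edge-colorable subgraph. Among the `k`-edge-colorable edge sets of
maximum size, choose `M` with `|M ∩ S|` as large as possible. Then `M` covers every vertex
that `S` covers.

Indeed, suppose that `M` misses the end `v` of an edge `x = vw` of `S`. If some color of `M` were
free at `w`, then `x` could be added with that color, since every color is free at `v`;
this contradicts the maximality of `|M|`. Hence `M` has `k` edges at `w`. As `S` has at most `k`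
edges at `w`, one of them being `x ∉ M`, some edge `e ∈ M` at `w` lies outside `S`. Giving the color
of `e` to `x` and removing `e`, we obtain a `k`-edge-colorable set of the same size with one
more edge in `S`, a contradiction.
-/

open SimpleGraph

variable {V : Type*}

/-- A subgraph is spanning if every vertex of the host graph has a neighbor in it. -/
def SpanningSub {G : SimpleGraph V} (H : G.Subgraph) : Prop :=
  ∀ v : V, ∃ w : V, H.Adj v w

/-- A subgraph is `k`-edge-colorable if its edges can be properly colored with `k` colors,
i.e. its edge set can be partitioned into `k` matchings. -/
def EdgeColorable {G : SimpleGraph V} (H : G.Subgraph) (k : ℕ) : Prop :=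
  ∃ f : H.edgeSet → Fin k, ∀ e₁ e₂ : H.edgeSet, e₁ ≠ e₂ →
    (∃ v : V, v ∈ (e₁ : Sym2 V) ∧ v ∈ (e₂ : Sym2 V)) → f e₁ ≠ f e₂

/-- A maximum `k`-edge-colorable subgraph: `k`-edge-colorable with as many edges as possible. -/
def MaximumEdgeColorable {G : SimpleGraph V} (H : G.Subgraph) (k : ℕ) : Prop :=
  EdgeColorable H k ∧
    ∀ H' : G.Subgraph, EdgeColorable H' k → H'.edgeSet.ncard ≤ H.edgeSet.ncard

/-- `sp G`: the least `k` such that `G` has a spanning `k`-edge-colorable subgraph. -/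
noncomputable def sp (G : SimpleGraph V) : ℕ :=
  sInf {k | ∃ H : G.Subgraph, SpanningSub H ∧ EdgeColorable H k}

/-- Maximum degree. -/
noncomputable def maxDeg (G : SimpleGraph V) : ℕ :=
  sSup (Set.range fun v : V => (G.neighborSet v).ncard)

/-- Minimum degree. -/
noncomputable def minDeg (G : SimpleGraph V) : ℕ :=
  sInf (Set.range fun v : V => (G.neighborSet v).ncard)

/-- Matching number. -/
noncomputable def matchNum (G : SimpleGraph V) : ℕ :=
  sSup {n | ∃ M : G.Subgraph, M.IsMatching ∧ M.edgeSet.ncard = n}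

section Multigraph

variable {ε : Type*} {ends : ε → Sym2 V} {E F M S : Set ε} {k : ℕ} {c d : ε → ℕ} {e x : ε}
  {v w : V}

/-- Proper `k`-edge-colorings of the edge set `E` of a multigraph, where `ends e` is the pair of
ends of the edge `e`. The map `c` is total, with arbitrary values outside `E`, so that one map can
color several edge sets; its values are natural numbers rather than elements of `Fin k`, so that it
also exists for `k = 0`. -/
structure IsEdgeColoring (ends : ε → Sym2 V) (E : Set ε) (k : ℕ) (c : ε → ℕ) : Prop where
  mapsTo : Set.MapsTo c E (Set.Iio k)
  injOn (v : V) : Set.InjOn c {e ∈ E | v ∈ ends e}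

/-- `k`-edge-colorability of the edge set `E` of a multigraph with end map `ends`. -/
def IsEdgeColorable (ends : ε → Sym2 V) (E : Set ε) (k : ℕ) : Prop :=
  ∃ c, IsEdgeColoring ends E k c

lemma IsEdgeColoring.mono (hE : IsEdgeColoring ends E k c) (hFE : F ⊆ E) :
    IsEdgeColoring ends F k c :=
  ⟨hE.mapsTo.mono_left hFE, fun v => (hE.injOn v).mono fun _ => And.imp_left (hFE ·)⟩

lemma IsEdgeColoring.insert [DecidableEq ε] {i : ℕ} (hE : IsEdgeColoring ends E k c) (hi : i < k)
    (hx : x ∉ E) (hfree : ∀ v ∈ ends x, ∀ e ∈ E, v ∈ ends e → c e ≠ i) :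
    IsEdgeColoring ends (insert x E) k (Function.update c x i) := by
  have update_eq : ∀ e ∈ E, Function.update c x i e = c e := fun e he =>
    Function.update_of_ne (ne_of_mem_of_not_mem he hx) _ _
  constructor
  · rintro e (rfl | he)
    · rwa [Function.update_self]
    · rw [update_eq e he]
      exact hE.mapsTo he
  · rintro v e₁ ⟨rfl | h₁, hv₁⟩ e₂ ⟨rfl | h₂, hv₂⟩ heq
    · rfl
    · rw [Function.update_self, update_eq e₂ h₂] at heq
      exact absurd heq.symm (hfree v hv₁ e₂ h₂ hv₂)
    · rw [Function.update_self, update_eq e₁ h₁] at heq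
      exact absurd heq (hfree v hv₂ e₁ h₁ hv₁)
    · rw [update_eq e₁ h₁, update_eq e₂ h₂] at heq
      exact hE.injOn v ⟨h₁, hv₁⟩ ⟨h₂, hv₂⟩ heq

lemma IsEdgeColoring.finite_incident (hE : IsEdgeColoring ends E k c) (v : V) :
    {e ∈ E | v ∈ ends e}.Finite :=
  .of_injOn (fun _ he => hE.mapsTo he.1) (hE.injOn v) (Set.finite_Iio k)

lemma IsEdgeColoring.ncard_incident_le (hE : IsEdgeColoring ends E k c) (v : V) :
    {e ∈ E | v ∈ ends e}.ncard ≤ k := by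
  simpa only [Set.ncard_Iio_nat] using
    Set.ncard_le_ncard_of_injOn c (fun _ he => hE.mapsTo he.1) (hE.injOn v) (Set.finite_Iio k)

lemma IsEdgeColoring.exists_incident_notMem (hS : IsEdgeColoring ends S k d) (hxS : x ∈ S)
    (hxM : x ∉ M) (hwx : w ∈ ends x) (hcolors : Set.Iio k ⊆ c '' {e ∈ M | w ∈ ends e}) :
    ∃ e ∈ M, w ∈ ends e ∧ e ∉ S := by
  by_contra! hMS
  have hsub : {e ∈ M | w ∈ ends e} ⊆ {e ∈ S | w ∈ ends e} := fun e he => ⟨hMS e he.1 he.2, he.2⟩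
  have hfin : {e ∈ M | w ∈ ends e}.Finite := (hS.finite_incident w).subset hsub
  have hcard : {e ∈ S | w ∈ ends e}.ncard ≤ {e ∈ M | w ∈ ends e}.ncard := calc
    _ ≤ (Set.Iio k).ncard := by simpa only [Set.ncard_Iio_nat] using hS.ncard_incident_le w
    _ ≤ (c '' {e ∈ M | w ∈ ends e}).ncard := Set.ncard_le_ncard hcolors (hfin.image c)
    _ ≤ _ := Set.ncard_image_le hfin
  have heq := Set.eq_of_subset_of_ncard_le hsub hcard (hS.finite_incident w)
  have hx : x ∈ {e ∈ M | w ∈ ends e} := heq ▸ ⟨hxS, hwx⟩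
  exact hxM hx.1

lemma isEdgeColorable_insert_or_exchange (hM : IsEdgeColorable ends M k)
    (hS : IsEdgeColorable ends S k) (hxS : x ∈ S) (hvx : v ∈ ends x)
    (hvM : ∀ e ∈ M, v ∉ ends e) :
    IsEdgeColorable ends (insert x M) k ∨
      ∃ e ∈ M, e ∉ S ∧ IsEdgeColorable ends (insert x (M \ {e})) k := by
  classical
  obtain ⟨c, hc⟩ := hM
  obtain ⟨d, hd⟩ := hS
  obtain ⟨w, hx⟩ := Sym2.mem_iff_exists.1 hvx
  have hxM : x ∉ M := fun h => hvM x h hvx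
  have insert_of_free : ∀ F ⊆ M, ∀ i < k, (∀ e ∈ F, w ∈ ends e → c e ≠ i) →
      IsEdgeColorable ends (insert x F) k := by
    intro F hFM i hi hfree
    refine ⟨_, (hc.mono hFM).insert hi (fun h => hxM (hFM h)) fun u hu e he hue => ?_⟩
    rw [hx, Sym2.mem_iff] at hu
    rcases hu with rfl | rfl
    · exact absurd hue (hvM e (hFM he))
    · exact hfree e he hue
  by_cases hcolors : Set.Iio k ⊆ c '' {e ∈ M | w ∈ ends e}
  · obtain ⟨e, heM, hwe, heS⟩ :=
      hd.exists_incident_notMem hxS hxM (hx ▸ Sym2.mem_mk_right v w) hcolors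
    refine .inr ⟨e, heM, heS, insert_of_free _ Set.sdiff_subset (c e) (hc.mapsTo heM) ?_⟩
    exact fun e' he' hwe' heq => he'.2 (hc.injOn w ⟨he'.1, hwe'⟩ ⟨heM, hwe⟩ heq)
  · obtain ⟨i, hi, hfree⟩ := Set.not_subset.1 hcolors
    exact .inl <| insert_of_free M subset_rfl i hi fun e he hwe heq => hfree ⟨e, ⟨he, hwe⟩, heq⟩

/-- The quantity maximized in the extremal argument: the size of `E`, ties being broken by the size
of the overlap with `S`. -/
noncomputable def lexSize (S E : Set ε) : ℕ ×ₗ ℕ :=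
  toLex (E.ncard, (E ∩ S).ncard)

lemma ncard_le_of_lexSize_le (h : lexSize S E ≤ lexSize S F) : E.ncard ≤ F.ncard :=
  Prod.Lex.monotone_fst _ _ h

lemma lexSize_lt_insert (hE : E.Finite) (hx : x ∉ E) : lexSize S E < lexSize S (insert x E) := by
  refine Prod.Lex.toLex_lt_toLex.2 (.inl ?_)
  rw [Set.ncard_insert_of_notMem hx hE]
  exact Nat.lt_succ_self _

lemma lexSize_lt_exchange (hE : E.Finite) (hxE : x ∉ E) (hxS : x ∈ S) (heE : e ∈ E)
    (heS : e ∉ S) : lexSize S E < lexSize S (insert x (E \ {e})) := by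
  have hinter : insert x (E \ {e}) ∩ S = insert x (E ∩ S) := by
    rw [Set.insert_inter_of_mem hxS, ← Set.inter_sdiff_right_comm,
      Set.sdiff_singleton_eq_self fun h => heS h.2]
  refine Prod.Lex.toLex_lt_toLex.2 (.inr ⟨(Set.ncard_exchange hxE heE).symm, ?_⟩)
  rw [hinter, Set.ncard_insert_of_notMem (fun h => hxE h.1) (hE.inter_of_left S)]
  exact Nat.lt_succ_self _

theorem exists_maximum_isEdgeColorable_covering (hF : F.Finite) (hSF : S ⊆ F)
    (hS : IsEdgeColorable ends S k) :
    ∃ M ⊆ F, IsEdgeColorable ends M k ∧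
      (∀ E ⊆ F, IsEdgeColorable ends E k → E.ncard ≤ M.ncard) ∧
      ∀ x ∈ S, ∀ v ∈ ends x, ∃ e ∈ M, v ∈ ends e := by
  obtain ⟨M, ⟨hMF, hM⟩, hmax⟩ := Set.exists_max_image {E | E ⊆ F ∧ IsEdgeColorable ends E k}
    (lexSize S) (hF.finite_subsets.subset fun _ hE => hE.1) ⟨S, hSF, hS⟩
  refine ⟨M, hMF, hM, fun E hEF hE => ncard_le_of_lexSize_le (hmax E ⟨hEF, hE⟩), ?_⟩
  intro x hxS v hvx
  by_contra! hvM
  have hxM : x ∉ M := fun h => hvM x h hvx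
  have hMfin : M.Finite := hF.subset hMF
  rcases isEdgeColorable_insert_or_exchange hM hS hxS hvx hvM with hins | ⟨e, heM, heS, hexch⟩
  · exact (lexSize_lt_insert hMfin hxM).not_ge
      (hmax _ ⟨Set.insert_subset (hSF hxS) hMF, hins⟩)
  · exact (lexSize_lt_exchange hMfin hxM hxS heM heS).not_ge
      (hmax _ ⟨Set.insert_subset (hSF hxS) (Set.sdiff_subset.trans hMF), hexch⟩)

end Multigraph

section SimpleGraph

variable {G : SimpleGraph V} {k : ℕ}

lemma edgeColorable_iff_isEdgeColorable {H : G.Subgraph} :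
    EdgeColorable H k ↔ IsEdgeColorable id H.edgeSet k := by
  constructor
  · rintro ⟨f, hf⟩
    let c : Sym2 V → ℕ := Function.extend Subtype.val (fun e => (f e : ℕ)) 0
    have c_eq (e : H.edgeSet) : c e = f e := Subtype.val_injective.extend_apply _ _ e
    refine ⟨c, fun e he => ?_, fun v e₁ h₁ e₂ h₂ heq => ?_⟩
    · rw [c_eq ⟨e, he⟩]
      exact (f ⟨e, he⟩).isLt
    · rw [c_eq ⟨e₁, h₁.1⟩, c_eq ⟨e₂, h₂.1⟩] at heq
      by_contra hne
      exact hf ⟨e₁, h₁.1⟩ ⟨e₂, h₂.1⟩ (Subtype.coe_ne_coe.1 hne) ⟨v, h₁.2, h₂.2⟩ (Fin.ext heq)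
  · rintro ⟨c, hc⟩
    refine ⟨fun e => ⟨c e, hc.mapsTo e.2⟩, fun e₁ e₂ hne ⟨v, h₁, h₂⟩ heq => hne ?_⟩
    exact Subtype.ext (hc.injOn v ⟨e₁.2, h₁⟩ ⟨e₂.2, h₂⟩ (congrArg Fin.val heq))

lemma exists_subgraph_edgeSet_eq {E : Set (Sym2 V)} (hE : E ⊆ G.edgeSet) :
    ∃ H : G.Subgraph, H.edgeSet = E := by
  have hle : fromEdgeSet E ≤ G := (fromEdgeSet_le G).2 (Set.sdiff_subset.trans hE)
  refine ⟨toSubgraph (fromEdgeSet E) hle, ?_⟩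
  have hdiag : Disjoint E Sym2.diagSet :=
    Set.subset_compl_iff_disjoint_right.1 (hE.trans (edgeSet_subset_compl_diagSet G))
  calc (toSubgraph (fromEdgeSet E) hle).edgeSet
    _ = (fromEdgeSet E).edgeSet := rfl
    _ = E := (edgeSet_eq_iff _ _).2 ⟨rfl, hdiag⟩

lemma mem_support_iff_exists_mem_edgeSet {H : G.Subgraph} {v : V} :
    v ∈ H.support ↔ ∃ e ∈ H.edgeSet, v ∈ e := by
  constructor
  · rintro ⟨w, hw⟩
    exact ⟨s(v, w), hw, Sym2.mem_mk_left v w⟩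
  · rintro ⟨e, he, hv⟩
    obtain ⟨w, rfl⟩ := Sym2.mem_iff_exists.1 hv
    exact ⟨w, he⟩

theorem spanning_maximum_k_edge_colorable_subgraph_exists_general [Finite G.edgeSet]
    {H : G.Subgraph} (hH : EdgeColorable H k) :
    ∃ M : G.Subgraph, MaximumEdgeColorable M k ∧ H.support ⊆ M.support := by
  obtain ⟨E, hEG, hE, hmax, hcover⟩ := exists_maximum_isEdgeColorable_covering G.edgeSet.toFinite
    H.edgeSet_subset (edgeColorable_iff_isEdgeColorable.1 hH)
  obtain ⟨M, rfl⟩ := exists_subgraph_edgeSet_eq hEG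
  refine ⟨M, ⟨edgeColorable_iff_isEdgeColorable.2 hE, fun H' hH' => ?_⟩, fun v hv => ?_⟩
  · exact hmax H'.edgeSet H'.edgeSet_subset (edgeColorable_iff_isEdgeColorable.1 hH')
  · obtain ⟨x, hx, hvx⟩ := mem_support_iff_exists_mem_edgeSet.1 hv
    exact mem_support_iff_exists_mem_edgeSet.2 (hcover x hx v hvx)

end SimpleGraph

/-- If a graph has a spanning `k`-edge-colorable subgraph, then it has a subgraph that is
simultaneously spanning and a maximum `k`-edge-colorable subgraph. -/
theorem spanning_maximum_k_edge_colorable_subgraph_exists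
    {V : Type*} [Fintype V] (G : SimpleGraph V) (k : ℕ)
    (h : ∃ H : G.Subgraph, SpanningSub H ∧ EdgeColorable H k) :
    ∃ H : G.Subgraph, SpanningSub H ∧ MaximumEdgeColorable H k := by
  obtain ⟨H, hspan, hcol⟩ := h
  obtain ⟨M, hmax, hsupp⟩ := spanning_maximum_k_edge_colorable_subgraph_exists_general hcol
  exact ⟨M, fun v => hsupp (hspan v), hmax⟩
end

section
/- For any graph G without isolated vertices, sp_1(G) = sp_2(G) = sp_3(G), where sp_1(G) is the minimum k such that G has a [1,k]-factor, sp_2(G) is the minimum k such that G has a spanning k-edge-colorable subgraph, and sp_3(G) is the minimum k such that G has a spanning maximum k-edge-colorable subgraph. -/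
/-!
For each `k`, if `G` has one of the three kinds of subgraph minimized over in `sp1`, `sp2` and
`sp3`, then it has all three.

Distinct edges of a `k`-edge-colored subgraph at a common vertex have distinct colors, so a spanning
`k`-edge-colorable subgraph is a `[1,k]`-factor. Conversely, a `[1,k]`-factor contains a minimal
spanning subgraph; there no edge has both ends of degree at least two, as it could be deleted, so
the components are stars with at most `k` edges, and these can be colored independently.

Now let `F` be spanning and `k`-edge-colorable, and among the maximum `k`-edge-colorable subgraphs
let `H` have a maximal intersection with `F`. Suppose `H` misses a vertex `v`, and let `vw` be an
edge of `F`. All `k` colors occur in `H` at `w`, since otherwise `vw` could be added to `H`. So `w`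
has `k` neighbors in `H`, none of them `v`, and at most `k` neighbors in `F`, one of them `v`; hence
some edge `wu` of `H` is not in `F`. Giving `vw` the color of `wu` and deleting `wu` yields a
maximum `k`-edge-colorable subgraph with a larger intersection with `F`.
-/

open SimpleGraph

variable {V : Type*}

/-- A `[1,k]`-factor: a spanning subgraph in which every vertex has degree between 1 and k. -/
def IsOneKFactor {V : Type*} {G : SimpleGraph V} (H : G.Subgraph) (k : ℕ) : Prop :=
  ∀ v : V, 1 ≤ (H.neighborSet v).ncard ∧ (H.neighborSet v).ncard ≤ k

noncomputable def sp1 {V : Type*} (G : SimpleGraph V) : ℕ :=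
  sInf {k | ∃ H : G.Subgraph, IsOneKFactor H k}

noncomputable def sp2 {V : Type*} (G : SimpleGraph V) : ℕ :=
  sInf {k | ∃ H : G.Subgraph, SpanningSub H ∧ EdgeColorable H k}

noncomputable def sp3 {V : Type*} (G : SimpleGraph V) : ℕ :=
  sInf {k | ∃ H : G.Subgraph, SpanningSub H ∧ MaximumEdgeColorable H k}

variable {G : SimpleGraph V} {F H H' : G.Subgraph} {k i : ℕ} {c : Sym2 V → ℕ} {v w u : V}

theorem isOneKFactor_iff :
    IsOneKFactor H k ↔ SpanningSub H ∧ ∀ v, (H.neighborSet v).encard ≤ k := by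
  simp only [IsOneKFactor, SpanningSub, Set.encard_le_coe_iff_finite_ncard_le, ← forall_and]
  refine forall_congr' fun v => ⟨fun ⟨hpos, hle⟩ => ?_, fun ⟨hne, hfin, hle⟩ => ?_⟩
  · exact ⟨Set.nonempty_of_ncard_ne_zero (Nat.one_le_iff_ne_zero.1 hpos),
      Set.finite_of_ncard_pos hpos, hle⟩
  · exact ⟨(Set.ncard_pos hfin).2 hne, hle⟩

section EdgeColoring

/-- A proper edge coloring of `H` with colors `0, …, k - 1`. To avoid functions on the subtype of
edges, `c` is defined on all unordered pairs; its values off the edges of `H` are irrelevant. -/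
structure IsProperEdgeColoring (H : G.Subgraph) (k : ℕ) (c : Sym2 V → ℕ) : Prop where
  lt_of_adj : ∀ ⦃v w⦄, H.Adj v w → c s(v, w) < k
  injOn : ∀ v, Set.InjOn (fun w => c s(v, w)) (H.neighborSet v)

theorem EdgeColorable.exists_isProperEdgeColoring (hH : EdgeColorable H k) :
    ∃ c, IsProperEdgeColoring H k c := by
  classical
  obtain ⟨f, hf⟩ := hH
  let c : Sym2 V → ℕ := fun e => if h : e ∈ H.edgeSet then f ⟨e, h⟩ else 0
  have c_eq {v w : V} (h : H.Adj v w) : c s(v, w) = f ⟨s(v, w), h⟩ := dif_pos (α := ℕ) h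
  refine ⟨c, fun v w h => c_eq h ▸ Fin.is_lt _, fun v w hw w' hw' heq => ?_⟩
  by_contra hne
  refine hf ⟨s(v, w), hw⟩ ⟨s(v, w'), hw'⟩ (fun h => hne ?_)
    ⟨v, Sym2.mem_mk_left v w, Sym2.mem_mk_left v w'⟩ (Fin.ext ?_)
  · exact Sym2.congr_right.1 (congrArg Subtype.val h)
  · rw [← c_eq hw, ← c_eq hw']
    exact heq

namespace IsProperEdgeColoring

theorem edgeColorable (hc : IsProperEdgeColoring H k c) : EdgeColorable H k := by
  have hlt : ∀ e ∈ H.edgeSet, c e < k := Sym2.ind fun _ _ h => hc.lt_of_adj h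
  refine ⟨fun e => ⟨c e, hlt e e.2⟩, ?_⟩
  rintro ⟨_, hw⟩ ⟨_, hw'⟩ hne ⟨v, ⟨w, rfl⟩, ⟨w', rfl⟩⟩ heq
  have : w = w' := hc.injOn v hw hw' (congrArg Fin.val heq)
  subst this
  exact hne rfl

theorem mono (hc : IsProperEdgeColoring H k c) (hle : H' ≤ H) : IsProperEdgeColoring H' k c where
  lt_of_adj _ _ h := hc.lt_of_adj (hle.2 h)
  injOn v := (hc.injOn v).mono (Subgraph.neighborSet_subset_of_subgraph hle v)

end IsProperEdgeColoring

/-- The set of colors that `c` gives to the edges of `H` at the vertex `v`; a color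
outside it is free at `v` for a new edge. -/
def colorsAt (H : G.Subgraph) (c : Sym2 V → ℕ) (v : V) : Set ℕ :=
  (fun w => c s(v, w)) '' H.neighborSet v

theorem mem_colorsAt_of_adj (c : Sym2 V → ℕ) (h : H.Adj v w) : c s(v, w) ∈ colorsAt H c v :=
  Set.mem_image_of_mem _ h

namespace IsProperEdgeColoring

theorem colorsAt_subset_Iio (hc : IsProperEdgeColoring H k c) (v : V) :
    colorsAt H c v ⊆ Set.Iio k :=
  Set.image_subset_iff.2 fun _ hw => hc.lt_of_adj hw

theorem encard_colorsAt (hc : IsProperEdgeColoring H k c) (v : V) :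
    (colorsAt H c v).encard = (H.neighborSet v).encard :=
  (hc.injOn v).encard_image

theorem update_sup_subgraphOfAdj [DecidableEq (Sym2 V)] (hc : IsProperEdgeColoring H k c)
    (hvw : G.Adj v w) (hi : i < k) (hv : i ∉ colorsAt H c v) (hw : i ∉ colorsAt H c w) :
    IsProperEdgeColoring (H ⊔ G.subgraphOfAdj hvw) k (Function.update c s(v, w) i) := by
  have adj_of_ne {a b : V} (hab : (H ⊔ G.subgraphOfAdj hvw).Adj a b) (hne : s(a, b) ≠ s(v, w)) :
      H.Adj a b :=
    hab.resolve_right hne.symm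
  have missing {a b b' : V} (heq : s(a, b) = s(v, w)) (hb' : H.Adj a b') : c s(a, b') ≠ i := by
    have ha : a ∈ s(v, w) := heq ▸ Sym2.mem_mk_left a b
    have : i ∉ colorsAt H c a := Sym2.ball (p := fun a => i ∉ colorsAt H c a) |>.2 ⟨hv, hw⟩ a ha
    exact fun h => this (h ▸ mem_colorsAt_of_adj c hb')
  refine ⟨fun a b hab => ?_, fun a b hb b' hb' heq => ?_⟩
  · obtain h | h := eq_or_ne s(a, b) s(v, w)
    · simpa only [h, Function.update_self] using hi
    · simpa only [Function.update_of_ne h] using hc.lt_of_adj (adj_of_ne hab h)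
  · obtain h | h := eq_or_ne s(a, b) s(v, w) <;> obtain h' | h' := eq_or_ne s(a, b') s(v, w)
    · exact Sym2.congr_right.1 (h.trans h'.symm)
    · simp only [h, Function.update_self, Function.update_of_ne h'] at heq
      exact absurd heq.symm (missing h (adj_of_ne hb' h'))
    · simp only [h', Function.update_self, Function.update_of_ne h] at heq
      exact absurd heq (missing h' (adj_of_ne hb h))
    · simp only [Function.update_of_ne h, Function.update_of_ne h'] at heq
      exact hc.injOn a (adj_of_ne hb h) (adj_of_ne hb' h') heq

end IsProperEdgeColoring

theorem EdgeColorable.encard_neighborSet_le (hH : EdgeColorable H k) (v : V) :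
    (H.neighborSet v).encard ≤ k := by
  obtain ⟨c, hc⟩ := hH.exists_isProperEdgeColoring
  calc (H.neighborSet v).encard = (colorsAt H c v).encard := (hc.encard_colorsAt v).symm
    _ ≤ (Set.Iio k).encard := Set.encard_le_encard (hc.colorsAt_subset_Iio v)
    _ = k := Set.Nat.encard_range k

end EdgeColoring

section StarForest

/-- A star forest: every component is a star or a single vertex, expressed by each edge having an
end with no other neighbor. Minimal spanning subgraphs have this shape. -/
def IsStarForest (H : G.Subgraph) : Prop :=
  ∀ ⦃v w⦄, H.Adj v w → H.neighborSet v = {w} ∨ H.neighborSet w = {v}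

theorem SpanningSub.deleteEdges_singleton (hH : SpanningSub H)
    (hv : (H.neighborSet v).Nontrivial) (hw : (H.neighborSet w).Nontrivial) :
    SpanningSub (H.deleteEdges {s(v, w)}) := by
  intro a
  obtain rfl | hav := eq_or_ne a v
  · obtain ⟨x, hx, hxw⟩ := hv.exists_ne w
    exact ⟨x, hx, fun h => hxw (Sym2.congr_right.1 h)⟩
  obtain rfl | haw := eq_or_ne a w
  · obtain ⟨x, hx, hxv⟩ := hw.exists_ne v
    exact ⟨x, hx, fun h => hxv (Sym2.congr_right.1 (h.trans Sym2.eq_swap))⟩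
  obtain ⟨x, hx⟩ := hH a
  refine ⟨x, hx, fun h => ?_⟩
  have ha : a ∈ s(v, w) := Set.mem_singleton_iff.1 h ▸ Sym2.mem_mk_left a x
  exact (Sym2.mem_iff.1 ha).elim hav haw

theorem isStarForest_of_minimal_spanningSub (hH : Minimal SpanningSub H) : IsStarForest H := by
  intro v w hvw
  by_contra! ⟨hv, hw⟩
  have hspan : SpanningSub (H.deleteEdges {s(v, w)}) :=
    hH.prop.deleteEdges_singleton ((Set.nontrivial_iff_ne_singleton hvw).2 hv)
      ((Set.nontrivial_iff_ne_singleton hvw.symm).2 hw)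
  exact ((hH.le_of_le hspan (Subgraph.deleteEdges_le _)).2 hvw).2 rfl

theorem spanningSub_sInf {C : Set G.Subgraph} (hne : C.Nonempty) (hC : DirectedOn (· ≥ ·) C)
    (hspan : ∀ H ∈ C, SpanningSub H) (hfin : ∀ H ∈ C, ∀ v, (H.neighborSet v).Finite) :
    SpanningSub (sInf C) := by
  intro v
  obtain ⟨H, hH, hmin⟩ := exists_minimalFor_of_wellFoundedLT (· ∈ C)
    (fun H => (H.neighborSet v).ncard) hne
  obtain ⟨w, hw⟩ := hspan H hH v
  refine ⟨w, (Subgraph.sInf_adj_of_nonempty hne).2 fun H' hH' => ?_⟩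
  obtain ⟨K, hK, hKH, hKH'⟩ := hC H hH H' hH'
  have hsub := Subgraph.neighborSet_subset_of_subgraph hKH v
  have heq : K.neighborSet v = H.neighborSet v :=
    Set.eq_of_subset_of_ncard_le hsub
      (hmin hK (Set.ncard_le_ncard hsub (hfin H hH v))) (hfin H hH v)
  exact hKH'.2 (heq ▸ hw : w ∈ K.neighborSet v)

theorem SpanningSub.exists_minimal_le (hF : SpanningSub F)
    (hfin : ∀ v, (F.neighborSet v).Finite) : ∃ H ≤ F, Minimal SpanningSub H := by
  let S : Set G.Subgraph := {H | SpanningSub H ∧ H ≤ F}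
  have chain_bound : ∀ C ⊆ S, IsChain (· ≤ ·) C → ∀ K ∈ C, ∃ L ∈ S, ∀ M ∈ C, L ≤ M := by
    intro C hC hchain K hK
    refine ⟨sInf C, ⟨?_, (sInf_le hK).trans (hC hK).2⟩, fun _ => sInf_le⟩
    have hdir : DirectedOn (· ≥ ·) C := IsChain.directedOn (r := (· ≥ ·)) hchain.symm
    exact spanningSub_sInf ⟨K, hK⟩ hdir (fun H hH => (hC hH).1) fun H hH v =>
      (hfin v).subset (Subgraph.neighborSet_subset_of_subgraph (hC hH).2 v)
  obtain ⟨H, hHF, hH⟩ : ∃ H ≤ F, Minimal (· ∈ S) H :=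
    @zorn_le_nonempty₀ G.Subgraphᵒᵈ _ S (fun C hC h => chain_bound C hC h.symm) F ⟨hF, le_rfl⟩
  exact ⟨H, hHF, hH.prop.1, fun K hK hle => hH.2 ⟨hK, hle.trans hHF⟩ hle⟩

theorem IsStarForest.edgeColorable (hH : IsStarForest H)
    (hk : ∀ v, (H.neighborSet v).encard ≤ k) : EdgeColorable H k := by
  have numbering (v : V) : ∃ g : V → ℕ, H.neighborSet v ⊆ g ⁻¹' Set.Iio (H.neighborSet v).ncard ∧
      Set.InjOn g (H.neighborSet v) := by
    have hfin := Set.finite_of_encard_le_coe (hk v)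
    exact hfin.exists_injOn_of_encard_le ((Set.Nat.encard_range _).trans hfin.cast_ncard_eq).ge
  choose g hg_lt hg_inj using numbering
  have g_leaf {v w : V} (h : H.neighborSet v = {w}) : g v w = 0 := by
    have := hg_lt v (h ▸ Set.mem_singleton w)
    simpa [h] using this
  -- The leaf of an edge gives its only neighbor the number `0`, so this sum is the number that the
  -- center gives to the leaf.
  let c : Sym2 V → ℕ := Sym2.lift ⟨fun v w => g v w + g w v, fun _ _ => add_comm _ _⟩
  have c_eq {v w : V} (hw : H.neighborSet w = {v}) : c s(v, w) = g v w := by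
    simp only [c, Sym2.lift_mk, g_leaf hw, add_zero]
  have c_lt {v w : V} (hvw : H.Adj v w) (hw : H.neighborSet w = {v}) : c s(v, w) < k :=
    c_eq hw ▸ (hg_lt v hvw).trans_le (Set.encard_le_coe_iff_finite_ncard_le.1 (hk v)).2
  refine IsProperEdgeColoring.edgeColorable (c := c)
    ⟨fun v w hvw => ?_, fun v w hw w' hw' heq => ?_⟩
  · obtain hv | hw := hH hvw
    · exact Sym2.eq_swap (a := v) ▸ c_lt hvw.symm hv
    · exact c_lt hvw hw
  · by_contra hne
    have leaf {x y : V} (hx : H.Adj v x) (hy : H.Adj v y) (hxy : x ≠ y) : H.neighborSet x = {v} :=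
      (hH hx).resolve_left fun h => hxy (Set.mem_singleton_iff.1 (h ▸ hy : y ∈ ({x} : Set V))).symm
    simp only [c_eq (leaf hw hw' hne), c_eq (leaf hw' hw (Ne.symm hne))] at heq
    exact hne (hg_inj v hw hw' heq)

end StarForest

section Maximum

theorem edgeSet_subgraph_deleteEdges (H : G.Subgraph) (D : Set (Sym2 V)) :
    (H.deleteEdges D).edgeSet = H.edgeSet \ D :=
  Set.ext <| Sym2.ind fun _ _ => Iff.rfl

theorem exists_maximumEdgeColorable [Finite V] (G : SimpleGraph V) (k : ℕ) :
    ∃ H : G.Subgraph, MaximumEdgeColorable H k := by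
  have hbot : IsProperEdgeColoring (⊥ : G.Subgraph) k 0 := ⟨by simp, by simp⟩
  exact Set.exists_max_image {H : G.Subgraph | EdgeColorable H k} (fun H => H.edgeSet.ncard)
    (Set.toFinite _) ⟨⊥, hbot.edgeColorable⟩

namespace MaximumEdgeColorable

variable [Finite V]

theorem mem_colorsAt_or_mem_colorsAt (hH : MaximumEdgeColorable H k)
    (hc : IsProperEdgeColoring H k c) (hvw : G.Adj v w) (hn : ¬ H.Adj v w) (hi : i < k) :
    i ∈ colorsAt H c v ∨ i ∈ colorsAt H c w := by
  classical
  by_contra! ⟨hv, hw⟩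
  have hle := hH.2 _ (hc.update_sup_subgraphOfAdj hvw hi hv hw).edgeColorable
  rw [Subgraph.edgeSet_sup, edgeSet_subgraphOfAdj, Set.union_singleton,
    Set.ncard_insert_of_notMem (mt Subgraph.mem_edgeSet.1 hn) (Set.toFinite _)] at hle
  exact Nat.not_succ_le_self _ hle

theorem encard_neighborSet_of_adj_isolated (hH : MaximumEdgeColorable H k)
    (hv : ∀ x, ¬ H.Adj v x) (hvw : G.Adj v w) : (H.neighborSet w).encard = k := by
  obtain ⟨c, hc⟩ := hH.1.exists_isProperEdgeColoring
  have all_colors : colorsAt H c w = Set.Iio k :=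
    (hc.colorsAt_subset_Iio w).antisymm fun i hi =>
      (hH.mem_colorsAt_or_mem_colorsAt hc hvw (hv w) hi).resolve_left fun ⟨x, hx, _⟩ => hv x hx
  rw [← hc.encard_colorsAt w, all_colors]
  exact Set.Nat.encard_range k

theorem exchange (hH : MaximumEdgeColorable H k) (hc : IsProperEdgeColoring H k c)
    (hvw : G.Adj v w) (hn : ¬ H.Adj v w) (hwu : H.Adj w u) (hv : c s(w, u) ∉ colorsAt H c v) :
    MaximumEdgeColorable (H.deleteEdges {s(w, u)} ⊔ G.subgraphOfAdj hvw) k := by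
  classical
  have hle : H.deleteEdges {s(w, u)} ≤ H := Subgraph.deleteEdges_le _
  have hv' : c s(w, u) ∉ colorsAt (H.deleteEdges {s(w, u)}) c v := fun h =>
    hv (Set.image_mono (Subgraph.neighborSet_subset_of_subgraph hle v) h)
  have hw' : c s(w, u) ∉ colorsAt (H.deleteEdges {s(w, u)}) c w := by
    rintro ⟨x, ⟨hwx, hne⟩, heq⟩
    exact hne (congrArg (s(w, ·)) (hc.injOn w hwx hwu heq))
  have hcard :
      (H.deleteEdges {s(w, u)} ⊔ G.subgraphOfAdj hvw).edgeSet.ncard = H.edgeSet.ncard := by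
    rw [Subgraph.edgeSet_sup, edgeSet_subgraphOfAdj, edgeSet_subgraph_deleteEdges,
      Set.union_singleton, Set.ncard_insert_of_notMem (fun h => hn h.1) (Set.toFinite _),
      Set.ncard_sdiff_singleton_add_one (Subgraph.mem_edgeSet.2 hwu) (Set.toFinite _)]
  exact ⟨((hc.mono hle).update_sup_subgraphOfAdj hvw (hc.lt_of_adj hwu) hv' hw').edgeColorable,
    fun H' hH' => hcard ▸ hH.2 H' hH'⟩

theorem spanningSub_of_maximalFor_inf
    (hH : MaximalFor (fun H : G.Subgraph => MaximumEdgeColorable H k) (· ⊓ F) H)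
    (hF : SpanningSub F) (hFk : EdgeColorable F k) : SpanningSub H := by
  intro v
  by_contra! hv
  obtain ⟨w, hvw⟩ := hF v
  obtain ⟨u, hwu, hFwu⟩ : ∃ u, H.Adj w u ∧ ¬ F.Adj w u := by
    by_contra! hsub
    have hss : H.neighborSet w ⊂ F.neighborSet w :=
      Set.ssubset_iff_exists.2 ⟨hsub, v, hvw.symm, fun h => hv w h.symm⟩
    have hlt := (Set.toFinite _).encard_lt_encard hss
    rw [hH.prop.encard_neighborSet_of_adj_isolated hv hvw.adj_sub] at hlt
    exact hlt.not_ge (hFk.encard_neighborSet_le w)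
  obtain ⟨c, hc⟩ := hH.prop.1.exists_isProperEdgeColoring
  have hmax := hH.prop.exchange hc hvw.adj_sub (hv w) hwu fun ⟨x, hx, _⟩ => hv x hx
  have hle : H ⊓ F ≤ H.deleteEdges {s(w, u)} ⊓ F := by
    refine ⟨subset_rfl, fun a b hab => ⟨⟨hab.1, fun h => hFwu ?_⟩, hab.2⟩⟩
    rw [← Subgraph.mem_edgeSet, ← Set.mem_singleton_iff.1 h]
    exact hab.2
  have hge := hH.2 hmax (hle.trans (inf_le_inf_right F le_sup_left))
  exact hv w (hge.2 ⟨Or.inr rfl, hvw⟩).1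

end MaximumEdgeColorable

end Maximum

theorem exists_isOneKFactor_iff :
    (∃ H : G.Subgraph, IsOneKFactor H k) ↔ ∃ H : G.Subgraph, SpanningSub H ∧ EdgeColorable H k := by
  constructor
  · rintro ⟨F, hF⟩
    obtain ⟨hspan, hdeg⟩ := isOneKFactor_iff.1 hF
    obtain ⟨H, hHF, hmin⟩ :=
      hspan.exists_minimal_le fun v => Set.finite_of_encard_le_coe (hdeg v)
    have hdegH (v : V) : (H.neighborSet v).encard ≤ k :=
      (Set.encard_le_encard (Subgraph.neighborSet_subset_of_subgraph hHF v)).trans (hdeg v)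
    exact ⟨H, hmin.prop, (isStarForest_of_minimal_spanningSub hmin).edgeColorable hdegH⟩
  · rintro ⟨H, hH, hk⟩
    exact ⟨H, isOneKFactor_iff.2 ⟨hH, hk.encard_neighborSet_le⟩⟩

theorem exists_spanningSub_edgeColorable_iff [Finite V] :
    (∃ H : G.Subgraph, SpanningSub H ∧ EdgeColorable H k) ↔
      ∃ H : G.Subgraph, SpanningSub H ∧ MaximumEdgeColorable H k := by
  refine ⟨fun ⟨F, hF, hFk⟩ => ?_, fun ⟨H, hH, hmax⟩ => ⟨H, hH, hmax.1⟩⟩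
  obtain ⟨H, hH⟩ := Set.Finite.exists_maximalFor (· ⊓ F)
    {H : G.Subgraph | MaximumEdgeColorable H k} (Set.toFinite _) (exists_maximumEdgeColorable G k)
  exact ⟨H, MaximumEdgeColorable.spanningSub_of_maximalFor_inf hH hF hFk, hH.prop⟩

/-- For any graph without isolated vertices, the three parameters coincide. -/
theorem sp1_eq_sp2_eq_sp3 {V : Type*} [Fintype V] (G : SimpleGraph V)
    (hG : ∀ v : V, ∃ w : V, G.Adj v w) :
    sp1 G = sp2 G ∧ sp2 G = sp3 G := by
  constructor
  · exact congrArg sInf (Set.ext fun _ => exists_isOneKFactor_iff)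
  · exact congrArg sInf (Set.ext fun _ => exists_spanningSub_edgeColorable_iff)
end

section
/- Let T be a tree with at least 3 vertices, and let v be a vertex of T with d_T(v) < Δ(T). Then there exists a (Δ(T)−1)-edge-colorable subgraph H of T such that either H covers every vertex of T, or the set of vertices of T not covered by H is exactly {v}. -/
/-!
Fix a parent of every vertex `u ≠ v`, one step closer to `v` than `u`. Put the edge from `u` to its
parent into `H` when `u` lies in a set `K` chosen so that a vertex is in `K` exactly when none of
its children is. Then every `u ≠ v` is covered, by the edge to its parent or by an edge to a child,
and `H` is a disjoint union of stars centred outside `K`. So it suffices to colour, at each vertex,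
the edges to its children injectively. Every vertex has at most `Δ - 1` children: a vertex other
than `v` has its parent among its at most `Δ` neighbours, and `v` has degree less than `Δ`.

The set `K` is a kernel of the digraph of children. In an infinite graph it cannot be built from the
leaves upwards; it exists because the digraph is bipartite, by parity of the distance to `v`.
-/

open SimpleGraph

variable {V : Type*}

/-- `K` is a kernel of the digraph with arcs `r`: an independent set to which every vertex outside
it has an arc. Both conditions are combined into one equivalence. -/
def IsKernel {α : Type*} (r : α → α → Prop) (K : Set α) : Prop :=
  ∀ u, u ∈ K ↔ ∀ w, r u w → w ∉ K

theorem exists_isKernel_of_bipartite {α : Type*} {r : α → α → Prop} (A : Set α)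
    (hA : ∀ ⦃u w⦄, r u w → (w ∈ A ↔ u ∉ A)) : ∃ K, IsKernel r K := by
  -- In the game of moving along arcs, where a player who cannot move loses, `P` consists of the
  -- positions lost for the player to move, and `F P \ P` of the drawn ones. Every drawn position
  -- has an arc to a drawn one, so `P` with the drawn positions in `A` is a kernel.
  let F (S : Set α) : Set α := {u | ∀ w, r u w → w ∉ S}
  have hF : Antitone F := fun _ _ hST _ hu w huw hw => hu w huw (hST hw)
  let P : Set α := OrderHom.lfp ⟨F ∘ F, hF.comp hF⟩
  have hP : F (F P) = P := OrderHom.map_lfp ⟨F ∘ F, hF.comp hF⟩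
  have hPF : P ⊆ F P := OrderHom.lfp_le_fixed _ (congrArg F hP)
  refine ⟨P ∪ F P ∩ A, fun u => ⟨?_, fun hu => ?_⟩⟩
  · rintro (huP | ⟨huF, huA⟩) w huw (hwP | ⟨hwF, hwA⟩)
    · exact hPF huP w huw hwP
    · exact hP.ge huP w huw hwF
    · exact huF w huw hwP
    · exact (hA huw).1 hwA huA
  · have huF : u ∈ F P := fun w huw hwP => hu w huw (.inl hwP)
    by_cases huA : u ∈ A
    · exact .inr ⟨huF, huA⟩
    · have huFF : u ∈ F (F P) := fun w huw hwF => hu w huw (.inr ⟨hwF, (hA huw).2 huA⟩)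
      exact .inl (hP.le huFF)

theorem exists_injective_prodMk_of_encard_fiber_le {α β : Type*} {S : Set α} {π : α → β} {k : ℕ}
    (hk : ∀ b, {a ∈ S | π a = b}.encard ≤ k) :
    ∃ f : S → Fin k, Function.Injective fun a : S => (π a, f a) := by
  have hfiber (b : β) : ∃ g : {a ∈ S | π a = b} → Fin k, Function.Injective g := by
    obtain ⟨hfin, hcard⟩ := Set.encard_le_coe_iff_finite_ncard_le.1 (hk b)
    have := hfin.to_subtype
    exact ⟨_, (Fin.castLE_injective hcard).comp (Finite.equivFin _).injective⟩
  choose g hg using hfiber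
  have hg_fiber (b : β) (x : {a ∈ S | π a = b}) : g (π x) ⟨x, x.2.1, rfl⟩ = g b x := by
    obtain ⟨a, ha, rfl⟩ := x
    rfl
  refine ⟨fun a => g (π a) ⟨a, a.2, rfl⟩, fun a a' h => ?_⟩
  obtain ⟨hπ, hga⟩ := Prod.mk.inj h
  have haa' := hg _ ((hg_fiber (π a') ⟨a, a.2, hπ⟩).symm.trans hga)
  exact Subtype.ext (Subtype.mk.inj haa')

section

variable {G : SimpleGraph V} {S : Set V} {π : V → V}

/-- The subgraph of `G` whose edges join each `u ∈ S` to its image `π u`. -/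
def functionalSubgraph (hS : ∀ u ∈ S, G.Adj u (π u)) : G.Subgraph :=
  ⨆ u : S, G.subgraphOfAdj (hS u u.2)

theorem functionalSubgraph_adj (hS : ∀ u ∈ S, G.Adj u (π u)) {u : V} (hu : u ∈ S) :
    (functionalSubgraph hS).Adj u (π u) :=
  Subgraph.iSup_adj.2 ⟨⟨u, hu⟩, rfl⟩

theorem mem_edgeSet_functionalSubgraph (hS : ∀ u ∈ S, G.Adj u (π u)) {e : Sym2 V} :
    e ∈ (functionalSubgraph hS).edgeSet ↔ ∃ u ∈ S, s(u, π u) = e := by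
  simp [functionalSubgraph, eq_comm]

theorem edgeColorable_functionalSubgraph (hS : ∀ u ∈ S, G.Adj u (π u))
    (hπS : ∀ u ∈ S, π u ∉ S) {k : ℕ} (hk : ∀ p, {u ∈ S | π u = p}.encard ≤ k) :
    EdgeColorable (functionalSubgraph hS) k := by
  obtain ⟨f, hf⟩ := exists_injective_prodMk_of_encard_fiber_le hk
  choose u huS hu using fun e : (functionalSubgraph hS).edgeSet =>
    (mem_edgeSet_functionalSubgraph hS).1 e.2
  refine ⟨fun e => f ⟨u e, huS e⟩, ?_⟩
  rintro e₁ e₂ hne ⟨x, hx₁, hx₂⟩ hcolor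
  suffices hcenter : π (u e₁) = π (u e₂) by
    have huu : u e₁ = u e₂ := congrArg Subtype.val (hf (Prod.ext hcenter hcolor))
    exact hne (Subtype.ext (by rw [← hu e₁, ← hu e₂, huu]))
  rw [← hu, Sym2.mem_iff] at hx₁ hx₂
  obtain hx₁ | hx₁ := hx₁ <;> obtain hx₂ | hx₂ := hx₂
  · rw [← hx₁, ← hx₂]
  · exact absurd (hx₂ ▸ hx₁ ▸ huS e₁) (hπS _ (huS e₂))
  · exact absurd (hx₁ ▸ hx₂ ▸ huS e₂) (hπS _ (huS e₁))
  · exact hx₁.symm.trans hx₂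

/-- `π` sends every vertex `u ≠ v` to its parent in some breadth-first spanning tree of `G` rooted
at `v`. The value `π v` is arbitrary. -/
structure IsParentMap (G : SimpleGraph V) (v : V) (π : V → V) : Prop where
  adj : ∀ u ≠ v, G.Adj u (π u)
  dist_eq : ∀ u ≠ v, G.dist u v = G.dist (π u) v + 1

theorem exists_adj_dist_eq_dist_add_one {u v : V} (huv : G.Reachable u v) (hne : u ≠ v) :
    ∃ p, G.Adj u p ∧ G.dist u v = G.dist p v + 1 := by
  obtain ⟨q, hq⟩ := huv.exists_walk_length_eq_dist
  cases q with
  | nil => exact absurd rfl hne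
  | cons hup q =>
    refine ⟨_, hup, le_antisymm ?_ (hq ▸ Nat.succ_le_succ (dist_le q))⟩
    rw [add_comm, ← dist_eq_one_iff_adj.2 hup]
    exact hup.reachable.dist_triangle_left v

theorem exists_isParentMap (hG : G.Preconnected) (v : V) : ∃ π, IsParentMap G v π := by
  have : Nonempty V := ⟨v⟩
  choose! π hadj hdist using fun u (hu : u ≠ v) => exists_adj_dist_eq_dist_add_one (hG u v) hu
  exact ⟨π, hadj, hdist⟩

/-- The children of `p` in the spanning tree with root `v` and parent map `π`. -/
def children (v : V) (π : V → V) (p : V) : Set V :=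
  {u | u ≠ v ∧ π u = p}

namespace IsParentMap

variable {v : V}

theorem children_subset_neighborSet (hπ : IsParentMap G v π) (p : V) :
    children v π p ⊆ G.neighborSet p := by
  rintro u ⟨hu, rfl⟩
  exact (hπ.adj u hu).symm

theorem parent_notMem_children (hπ : IsParentMap G v π) {u : V} (hu : u ≠ v) :
    π u ∉ children v π u := by
  rintro ⟨hπu, hππu⟩
  have hdist := hπ.dist_eq (π u) hπu
  rw [hππu] at hdist
  have := hπ.dist_eq u hu
  omega

theorem encard_children_add_one_le (hπ : IsParentMap G v π) {Δ : ℕ∞}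
    (hΔ : ∀ u, (G.neighborSet u).encard ≤ Δ) (hv : (G.neighborSet v).encard < Δ) (p : V) :
    (children v π p).encard + 1 ≤ Δ := by
  have hsub := hπ.children_subset_neighborSet p
  by_cases hp : p = v
  · subst hp
    exact Order.add_one_le_of_lt ((Set.encard_le_encard hsub).trans_lt hv)
  · calc (children v π p).encard + 1
        = (insert (π p) (children v π p)).encard :=
          (Set.encard_insert_of_notMem (hπ.parent_notMem_children hp)).symm
      _ ≤ (G.neighborSet p).encard :=
          Set.encard_le_encard (Set.insert_subset (hπ.adj p hp) hsub)
      _ ≤ Δ := hΔ p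

theorem exists_isKernel_children (hπ : IsParentMap G v π) :
    ∃ K, IsKernel (fun p u => u ∈ children v π p) K := by
  refine exists_isKernel_of_bipartite {u | Even (G.dist u v)} ?_
  rintro p u ⟨hu, rfl⟩
  simp only [Set.mem_ofPred_eq, hπ.dist_eq u hu, Nat.even_add_one]

end IsParentMap

theorem IsKernel.exists_adj_functionalSubgraph {v : V} {K : Set V}
    (hK : IsKernel (fun p u => u ∈ children v π p) K) (hS : ∀ u ∈ K \ {v}, G.Adj u (π u))
    {u : V} (hu : u ≠ v) : ∃ w, (functionalSubgraph hS).Adj u w := by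
  by_cases huK : u ∈ K
  · exact ⟨π u, functionalSubgraph_adj hS ⟨huK, hu⟩⟩
  · obtain ⟨w, ⟨hwv, rfl⟩, hwK⟩ : ∃ w, w ∈ children v π u ∧ w ∈ K := by
      simpa using (hK u).not.1 huK
    exact ⟨w, (functionalSubgraph_adj hS ⟨hwK, hwv⟩).symm⟩

theorem spanningSub_or_uncovered_eq_singleton {H : G.Subgraph} {v : V}
    (hH : ∀ u ≠ v, ∃ w, H.Adj u w) :
    SpanningSub H ∨ {x : V | ¬ ∃ w : V, H.Adj x w} = {v} := by
  have hsub : {x : V | ¬ ∃ w : V, H.Adj x w} ⊆ {v} := fun x hx => not_imp_comm.1 (hH x) hx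
  exact (Set.subset_singleton_iff_eq.1 hsub).imp_left fun h x =>
    not_not.1 (Set.eq_empty_iff_forall_notMem.1 h x)

theorem encard_neighborSet_le_maxDeg [Finite V] (G : SimpleGraph V) (u : V) :
    (G.neighborSet u).encard ≤ maxDeg G := by
  rw [← (Set.toFinite _).cast_ncard_eq, Nat.cast_le]
  exact le_csSup (Set.finite_range _).bddAbove ⟨u, rfl⟩

theorem tree_deltaMinusOne_colorable_subgraph_general (hG : G.Preconnected) {Δ : ℕ}
    (hΔ : ∀ u, (G.neighborSet u).encard ≤ Δ) {v : V} (hv : (G.neighborSet v).encard < Δ) :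
    ∃ H : G.Subgraph, EdgeColorable H (Δ - 1) ∧
      (SpanningSub H ∨ {x : V | ¬ ∃ w : V, H.Adj x w} = {v}) := by
  obtain ⟨π, hπ⟩ := exists_isParentMap hG v
  obtain ⟨K, hK⟩ := hπ.exists_isKernel_children
  have hS : ∀ u ∈ K \ {v}, G.Adj u (π u) := fun u hu => hπ.adj u hu.2
  have hcenter : ∀ u ∈ K \ {v}, π u ∉ K \ {v} := fun u hu hπu =>
    (hK (π u)).1 hπu.1 u ⟨hu.2, rfl⟩ hu.1
  have hfiber (p : V) : {u ∈ K \ {v} | π u = p}.encard ≤ (Δ - 1 : ℕ) := by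
    have hsub : {u ∈ K \ {v} | π u = p} ⊆ children v π p := fun u hu => ⟨hu.1.2, hu.2⟩
    rw [ENat.natCast_sub, Nat.cast_one]
    exact (Set.encard_le_encard hsub).trans
      (ENat.le_sub_of_add_le_right ENat.one_ne_top (hπ.encard_children_add_one_le hΔ hv p))
  exact ⟨functionalSubgraph hS, edgeColorable_functionalSubgraph hS hcenter hfiber,
    spanningSub_or_uncovered_eq_singleton fun u hu => hK.exists_adj_functionalSubgraph hS hu⟩

end

/-- Let `T` be a tree with at least 3 vertices and `v` a vertex of degree less than `Δ(T)`.
Then there is a `(Δ(T) - 1)`-edge-colorable subgraph `H` of `T` covering every vertex, or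
missing exactly the vertex `v`. -/
theorem tree_deltaMinusOne_colorable_subgraph {V : Type*} [Fintype V] (T : SimpleGraph V)
    (hT : T.IsTree) (hcard : 3 ≤ Fintype.card V) (v : V)
    (hv : (T.neighborSet v).ncard < maxDeg T) :
    ∃ H : T.Subgraph, EdgeColorable H (maxDeg T - 1) ∧
      (SpanningSub H ∨ {x : V | ¬ ∃ w : V, H.Adj x w} = {v}) :=
  tree_deltaMinusOne_colorable_subgraph_general hT.connected.preconnected
    (encard_neighborSet_le_maxDeg T) (by rwa [← (Set.toFinite _).cast_ncard_eq, Nat.cast_lt])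
end

section
/- Let T be a tree with at least 3 edges and let v be a vertex of T. If there exists a (Δ(T)−1)-edge-colorable subgraph H of T that covers every vertex of T except v, then there exists a spanning Δ(T)-edge-colorable subgraph H' of T such that v has degree exactly 1 in H'. -/
/-! Adding to `H` an edge at `v`, which is a matching on its own, costs one new color and covers
`v`; the new edge is the only one at `v` because `H` misses `v`. -/

open SimpleGraph

variable {V : Type*}

theorem EdgeColorable.sup {G : SimpleGraph V} {H K : G.Subgraph} {k l : ℕ}
    (hH : EdgeColorable H k) (hK : EdgeColorable K l) : EdgeColorable (H ⊔ K) (k + l) := by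
  classical
  obtain ⟨f, hf⟩ := hH
  obtain ⟨g, hg⟩ := hK
  have mem_right (e : (H ⊔ K).edgeSet) (he : (e : Sym2 V) ∉ H.edgeSet) :
      (e : Sym2 V) ∈ K.edgeSet :=
    (Subgraph.edgeSet_sup ▸ e.2 : (e : Sym2 V) ∈ H.edgeSet ∪ K.edgeSet).resolve_left he
  have castAdd_ne_natAdd (i : Fin k) (j : Fin l) : i.castAdd l ≠ j.natAdd k :=
    Fin.ne_of_lt (i.isLt.trans_le (Nat.le_add_right k j))
  refine ⟨fun e ↦ if he : (e : Sym2 V) ∈ H.edgeSet then (f ⟨e, he⟩).castAdd l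
    else (g ⟨e, mem_right e he⟩).natAdd k, fun e₁ e₂ hne hinc ↦ ?_⟩
  have hne' : (e₁ : Sym2 V) ≠ e₂ := Subtype.coe_injective.ne hne
  by_cases h₁ : (e₁ : Sym2 V) ∈ H.edgeSet <;> by_cases h₂ : (e₂ : Sym2 V) ∈ H.edgeSet
  · simpa only [h₁, h₂, dite_true, ne_eq, Fin.castAdd_inj] using
      hf ⟨e₁, h₁⟩ ⟨e₂, h₂⟩ (ne_of_apply_ne Subtype.val hne') hinc
  · simpa only [h₁, h₂, dite_true, dite_false] using castAdd_ne_natAdd _ _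
  · simpa only [h₁, h₂, dite_true, dite_false] using (castAdd_ne_natAdd _ _).symm
  · simpa only [h₁, h₂, dite_false, ne_eq, Fin.natAdd_inj] using
      hg ⟨e₁, mem_right e₁ h₁⟩ ⟨e₂, mem_right e₂ h₂⟩ (ne_of_apply_ne Subtype.val hne') hinc

theorem edgeColorable_one_of_isMatching {G : SimpleGraph V} {M : G.Subgraph}
    (hM : M.IsMatching) : EdgeColorable M 1 := by
  refine ⟨fun _ ↦ 0, ?_⟩
  rintro ⟨e₁, he₁⟩ ⟨e₂, he₂⟩ hne ⟨x, hx₁, hx₂⟩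
  obtain ⟨a, rfl⟩ := hx₁
  obtain ⟨b, rfl⟩ := hx₂
  have hab : a = b := hM.eq_of_adj_left he₁ he₂
  exact absurd (Subtype.ext (congrArg (s(x, ·)) hab)) hne

theorem spanningSub_sup_subgraphOfAdj {G : SimpleGraph V} {H : G.Subgraph} {v w : V}
    (hvw : G.Adj v w) (hcover : ∀ x, x ≠ v → ∃ y, H.Adj x y) :
    SpanningSub (H ⊔ G.subgraphOfAdj hvw) := by
  intro x
  obtain rfl | hx := eq_or_ne x v
  · exact ⟨w, Or.inr rfl⟩
  · exact (hcover x hx).imp fun _ ↦ Or.inl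

theorem ncard_neighborSet_sup_subgraphOfAdj_eq_one {G : SimpleGraph V} {H : G.Subgraph} {v w : V}
    (hvw : G.Adj v w) (hv : ¬∃ y, H.Adj v y) :
    ((H ⊔ G.subgraphOfAdj hvw).neighborSet v).ncard = 1 := by
  have hempty : H.neighborSet v = ∅ := Set.not_nonempty_iff_eq_empty.mp hv
  rw [Subgraph.neighborSet_sup, hempty, neighborSet_fst_subgraphOfAdj, Set.empty_union,
    Set.ncard_singleton]

theorem maxDeg_pos_of_adj [Finite V] {G : SimpleGraph V} {v w : V} (hvw : G.Adj v w) :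
    0 < maxDeg G :=
  calc
    0 < (G.neighborSet v).ncard := (Set.ncard_pos (Set.toFinite _)).mpr ⟨w, hvw⟩
    _ ≤ maxDeg G := le_csSup (Set.finite_range _).bddAbove ⟨v, rfl⟩

theorem exists_adj_of_preconnected_of_edgeSet_nonempty {G : SimpleGraph V}
    (hG : G.Preconnected) (hne : G.edgeSet.Nonempty) (v : V) : ∃ w, G.Adj v w := by
  have : Nontrivial V := SimpleGraph.nontrivial_iff.mp ⟨G, ⊥, edgeSet_nonempty.mp hne⟩
  exact hG.exists_adj_of_nontrivial v

theorem tree_spanning_maxDeg_colorable_degree_one_general {G : SimpleGraph V} {k : ℕ} {v w : V}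
    (hvw : G.Adj v w)
    (h : ∃ H : G.Subgraph, EdgeColorable H k ∧
      (∀ x : V, x ≠ v → ∃ w : V, H.Adj x w) ∧ ¬ ∃ w : V, H.Adj v w) :
    ∃ H' : G.Subgraph, SpanningSub H' ∧ EdgeColorable H' (k + 1) ∧
      (H'.neighborSet v).ncard = 1 := by
  obtain ⟨H, hcolor, hcover, hmiss⟩ := h
  exact ⟨H ⊔ G.subgraphOfAdj hvw, spanningSub_sup_subgraphOfAdj hvw hcover,
    hcolor.sup (edgeColorable_one_of_isMatching (Subgraph.IsMatching.subgraphOfAdj hvw)),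
    ncard_neighborSet_sup_subgraphOfAdj_eq_one hvw hmiss⟩

/-- Let `T` be a tree with at least 3 edges and `v` a vertex of `T`. If there is a
`(Δ(T) - 1)`-edge-colorable subgraph of `T` covering every vertex except `v`, then there is a
spanning `Δ(T)`-edge-colorable subgraph `H'` of `T` in which `v` has degree exactly 1. -/
theorem tree_spanning_maxDeg_colorable_degree_one {V : Type*} [Fintype V] (T : SimpleGraph V)
    (hT : T.IsTree) (hedges : 3 ≤ T.edgeSet.ncard) (v : V)
    (h : ∃ H : T.Subgraph, EdgeColorable H (maxDeg T - 1) ∧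
      (∀ x : V, x ≠ v → ∃ w : V, H.Adj x w) ∧ ¬ ∃ w : V, H.Adj v w) :
    ∃ H' : T.Subgraph, SpanningSub H' ∧ EdgeColorable H' (maxDeg T) ∧
      (H'.neighborSet v).ncard = 1 := by
  obtain ⟨w, hvw⟩ := exists_adj_of_preconnected_of_edgeSet_nonempty hT.connected.preconnected
    (Set.nonempty_of_ncard_ne_zero (by lia)) v
  simpa only [Nat.sub_add_cancel (maxDeg_pos_of_adj hvw)] using
    tree_spanning_maxDeg_colorable_degree_one_general hvw h
end

section
/- For any almost regular graph G (i.e., a graph with Δ(G) − δ(G) ≤ 1) without isolated vertices, sp(G) ≤ 2. -/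
/-!
If the degrees of adjacent vertices differ by a factor of at most `k`, then weighting each edge
between `X` and `N(X)` by the inverse degree of its end in `X` gives `|X| ≤ k * |N(X)|` for all
finite `X`. Hall's theorem with `k` copies of each vertex then yields a map `f` with `f v` adjacent
to `v` whose fibers are injectively colored with `k` colors. The spanning subgraph consists of edges
`{v, f v}`.

A maximal semikernel `L` of the digraph with arcs `f v → v` supplies the edges `{v, f v}`, `v ∈ L`:
they form stars with centers in `f '' L`, and Hall's coloring is proper on each star. By maximality,
`f` maps the set `D` of vertices missed by these stars onto a superset of itself, so `D` is covered
by the edges `{v, f v}` with `v` in a set on which `f` is injective. These edges form paths and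
cycles inside `D`, and a minimal subfamily that still covers `D` contains no three consecutive
edges, hence two colors suffice for it.
-/

open SimpleGraph

variable {V : Type*}

/-- A proper coloring of the edges `{x, f x}` with `x ∈ T`, in which the edge `{x, f x}` is
represented by `x`. An edge may be represented, and colored, twice: if `x, f x ∈ T` and
`f (f x) = x`. The values of `col` outside `T` are irrelevant. -/
structure IsArcColoring {κ : Type*} (f : V → V) (T : Set V) (col : V → κ) : Prop where
  injOn : Set.InjOn (fun x => (f x, col x)) T
  ne_apply : ∀ x ∈ T, f x ∈ T → col x ≠ col (f x)

/-- A semikernel of the digraph with arcs `f x → x`: an independent set `L` such that every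
out-neighbor of `L` has an out-neighbor in `L`. -/
structure IsSemikernel (f : V → V) (L : Set V) : Prop where
  apply_notMem : ∀ x ∈ L, f x ∉ L
  mem_image : ∀ x, f x ∈ L → x ∈ f '' L

/-- A subset of `E` containing `x` or `f x` for every `x ∈ E`. Every vertex in `f '' E` is then an
end of one of the edges `{y, f y}` with `y ∈ T`. -/
structure IsArcCover (f : V → V) (E T : Set V) : Prop where
  subset : T ⊆ E
  mem_or_apply_mem : ∀ x ∈ E, x ∈ T ∨ f x ∈ T

namespace IsArcColoring

variable {κ : Type*} {f : V → V} {S T : Set V} {col col' : V → κ}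

lemma union_piecewise [∀ x, Decidable (x ∈ S)] (hS : IsArcColoring f S col)
    (hT : IsArcColoring f T col') (hdisj : Disjoint (S ∪ f '' S) (T ∪ f '' T)) :
    IsArcColoring f (S ∪ T) (S.piecewise col col') := by
  have hne : ∀ x ∈ S ∪ f '' S, ∀ y ∈ T ∪ f '' T, x ≠ y := fun _ hx _ hy => hdisj.ne_of_mem hx hy
  have hcol : ∀ x ∈ S, S.piecewise col col' x = col x := fun x => Set.piecewise_eq_of_mem _ _ _
  have hcol' : ∀ x ∈ T, S.piecewise col col' x = col' x := fun x hx =>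
    Set.piecewise_eq_of_notMem _ _ _ fun hxS => hne x (.inl hxS) x (.inl hx) rfl
  constructor
  · refine (Set.injOn_union (hdisj.mono Set.subset_union_left Set.subset_union_left)).2
      ⟨hS.injOn.congr fun x hx => by simp only [hcol x hx],
        hT.injOn.congr fun x hx => by simp only [hcol' x hx], fun x hx y hy hxy => ?_⟩
    exact hne _ (.inr ⟨x, hx, rfl⟩) _ (.inr ⟨y, hy, rfl⟩) (congrArg Prod.fst hxy)
  · rintro x (hx | hx) (hfx | hfx)
    · rw [hcol _ hx, hcol _ hfx]
      exact hS.ne_apply x hx hfx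
    · exact (hne _ (.inr ⟨x, hx, rfl⟩) _ (.inl hfx) rfl).elim
    · exact (hne _ (.inl hfx) _ (.inr ⟨x, hx, rfl⟩) rfl).elim
    · rw [hcol' _ hx, hcol' _ hfx]
      exact hT.ne_apply x hx hfx

lemma exists_of_apply_apply_notMem [Nontrivial κ] (hinj : T.InjOn f)
    (hT : ∀ x ∈ T, f x ∈ T → f (f x) ∉ T) : ∃ col : V → κ, IsArcColoring f T col := by
  classical
  obtain ⟨a, b, hab⟩ := exists_pair_ne κ
  refine ⟨fun x => if f x ∈ T then a else b, fun x hx y hy hxy => ?_, fun x hx hfx => ?_⟩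
  · exact hinj hx hy (congrArg Prod.fst hxy)
  · simpa only [if_pos hfx, if_neg (hT x hx hfx)] using hab

lemma exists_spanningSub_edgeColorable {G : SimpleGraph V} {k : ℕ} {col : V → Fin k}
    (hcol : IsArcColoring f T col) (hadj : ∀ v, G.Adj v (f v)) (hcover : ∀ v, v ∈ T ∪ f '' T) :
    ∃ H : G.Subgraph, SpanningSub H ∧ EdgeColorable H k := by
  let H : G.Subgraph :=
    { verts := Set.univ
      Adj := fun x y => (x ∈ T ∧ f x = y) ∨ (y ∈ T ∧ f y = x)
      adj_sub := by
        rintro x y (⟨-, rfl⟩ | ⟨-, rfl⟩)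
        exacts [hadj x, (hadj y).symm]
      edge_vert := fun _ => Set.mem_univ _
      symm := ⟨fun _ _ => Or.symm⟩ }
  have htail : ∀ e : H.edgeSet, ∃ x ∈ T, (e : Sym2 V) = s(x, f x) := by
    rintro ⟨⟨x, y⟩, ⟨hx, hxy⟩ | ⟨hy, hyx⟩⟩
    exacts [⟨x, hx, congrArg (s(x, ·)) hxy.symm⟩,
      ⟨y, hy, Sym2.eq_swap.trans (congrArg (s(y, ·)) hyx.symm)⟩]
  choose tail htailT htail using htail
  have htail_inj : tail.Injective := fun e₁ e₂ h => Subtype.ext (by rw [htail, htail, h])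
  refine ⟨H, fun v => ?_, col ∘ tail, fun e₁ e₂ hne ⟨v, hv₁, hv₂⟩ heq => ?_⟩
  · obtain hv | ⟨w, hw, rfl⟩ := hcover v
    exacts [⟨f v, .inl ⟨hv, rfl⟩⟩, ⟨w, .inr ⟨hw, rfl⟩⟩]
  · have hT₁ := htailT e₁
    have hT₂ := htailT e₂
    rw [htail, Sym2.mem_iff] at hv₁ hv₂
    obtain rfl | rfl := hv₁ <;> obtain h | h := hv₂
    · exact hne (htail_inj h)
    · exact hcol.ne_apply _ hT₂ (h ▸ hT₁) (h ▸ heq.symm)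
    · exact hcol.ne_apply _ hT₁ (h ▸ hT₂) (h ▸ heq)
    · exact hne (htail_inj (hcol.injOn hT₁ hT₂ (Prod.ext h heq)))

end IsArcColoring

namespace IsSemikernel

variable {f : V → V} {L : Set V}

lemma sUnion {c : Set (Set V)} (hchain : IsChain (· ⊆ ·) c) (hc : ∀ L ∈ c, IsSemikernel f L) :
    IsSemikernel f (⋃₀ c) := by
  constructor
  · rintro x ⟨A, hA, hxA⟩ ⟨B, hB, hfxB⟩
    obtain hAB | hBA := hchain.total hA hB
    · exact (hc B hB).apply_notMem x (hAB hxA) hfxB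
    · exact (hc A hA).apply_notMem x hxA (hBA hfxB)
  · rintro x ⟨A, hA, hfxA⟩
    exact Set.image_mono (Set.subset_sUnion_of_mem hA) ((hc A hA).mem_image x hfxA)

lemma exists_maximal (f : V → V) : ∃ L, Maximal (IsSemikernel f) L :=
  zorn_subset {L | IsSemikernel f L} fun c hc hchain =>
    ⟨⋃₀ c, sUnion hchain hc, fun _ => Set.subset_sUnion_of_mem⟩

lemma insert (hL : IsSemikernel f L) {x : V} (hfix : f x ≠ x) (hx : x ∉ f '' L)
    (hpre : ∀ y, f y = x → y ∈ f '' L) : IsSemikernel f (insert x L) := by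
  constructor
  · rintro y (rfl | hy) (hfy | hfy)
    · exact hfix hfy
    · exact hx (hL.mem_image y hfy)
    · exact hx ⟨y, hy, hfy⟩
    · exact hL.apply_notMem y hy hfy
  · rintro y (hy | hy)
    · exact Set.image_mono (Set.subset_insert x L) (hpre y hy)
    · exact Set.image_mono (Set.subset_insert x L) (hL.mem_image y hy)

lemma surjOn_compl_of_maximal (hL : Maximal (IsSemikernel f) L) (hfix : ∀ v, f v ≠ v) :
    Set.SurjOn f (L ∪ f '' L)ᶜ (L ∪ f '' L)ᶜ := by
  intro x hx
  by_contra hpre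
  have hpre' : ∀ y, f y = x → y ∈ f '' L := by
    intro y hy
    by_contra hyL
    exact hpre ⟨y, not_or.2 ⟨fun h => hx (.inr ⟨y, h, hy⟩), hyL⟩, hy⟩
  have hins := hL.prop.insert (hfix x) (fun h => hx (.inr h)) hpre'
  exact hx (.inl (hL.le_of_ge hins (Set.subset_insert x L) (Set.mem_insert x L)))

lemma isArcColoring {κ : Type*} {c : V → κ} (hL : IsSemikernel f L)
    (hinj : Function.Injective fun v => (f v, c v)) : IsArcColoring f L c :=
  ⟨hinj.injOn, fun x hx hfx => (hL.apply_notMem x hx hfx).elim⟩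

end IsSemikernel

namespace IsArcCover

variable {f : V → V} {E T : Set V}

lemma sInter {c : Set (Set V)} (hne : c.Nonempty) (hchain : IsChain (· ⊆ ·) c)
    (hc : ∀ T ∈ c, IsArcCover f E T) : IsArcCover f E (⋂₀ c) := by
  obtain ⟨T₀, hT₀⟩ := hne
  refine ⟨(Set.sInter_subset_of_mem hT₀).trans (hc T₀ hT₀).subset, fun x hx => ?_⟩
  by_contra! hnot
  simp only [Set.mem_sInter, not_forall] at hnot
  obtain ⟨⟨A, hA, hxA⟩, B, hB, hfxB⟩ := hnot
  obtain hAB | hBA := hchain.total hA hB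
  · exact ((hc A hA).mem_or_apply_mem x hx).elim hxA fun h => hfxB (hAB h)
  · exact ((hc B hB).mem_or_apply_mem x hx).elim (fun h => hxA (hBA h)) hfxB

lemma exists_minimal (f : V → V) (E : Set V) : ∃ T, Minimal (IsArcCover f E) T := by
  obtain ⟨T, -, hT⟩ := zorn_superset_nonempty {T | IsArcCover f E T}
    (fun c hc hchain hne => ⟨⋂₀ c, sInter hne hchain hc, fun _ => Set.sInter_subset_of_mem⟩)
    E ⟨subset_rfl, fun _ => .inl⟩
  exact ⟨T, hT⟩

lemma apply_apply_notMem_of_minimal (hT : Minimal (IsArcCover f E) T) (hinj : E.InjOn f)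
    (hfix : ∀ v, f v ≠ v) : ∀ x ∈ T, f x ∈ T → f (f x) ∉ T := by
  intro x hx hfx hffx
  -- the edges of `x` and `f (f x)` cover both ends of the edge of `f x`
  have hcover : IsArcCover f E (T \ {f x}) := by
    refine ⟨Set.sdiff_subset.trans hT.prop.subset, fun y hy => ?_⟩
    by_cases hyx : f y = f x
    · obtain rfl := hinj hy (hT.prop.subset hx) hyx
      exact .inl ⟨hx, (hfix y).symm⟩
    by_cases hyfx : y = f x
    · exact .inr ⟨hyfx ▸ hffx, hyx⟩
    · exact (hT.prop.mem_or_apply_mem y hy).imp (⟨·, hyfx⟩) (⟨·, hyx⟩)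
  exact (hT.le_of_le hcover Set.sdiff_subset hfx).2 rfl

end IsArcCover

lemma exists_isArcColoring_cover {κ : Type*} [Nontrivial κ] {f : V → V} {c : V → κ}
    (hinj : Function.Injective fun v => (f v, c v)) (hfix : ∀ v, f v ≠ v) :
    ∃ (T : Set V) (col : V → κ), IsArcColoring f T col ∧ ∀ v, v ∈ T ∪ f '' T := by
  classical
  obtain ⟨L, hL⟩ := IsSemikernel.exists_maximal f
  obtain ⟨E, hED, hbij⟩ := (IsSemikernel.surjOn_compl_of_maximal hL hfix).exists_bijOn_subset
  obtain ⟨T, hT⟩ := IsArcCover.exists_minimal f E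
  have hTE := hT.prop.subset
  obtain ⟨col, hcol⟩ := IsArcColoring.exists_of_apply_apply_notMem (κ := κ)
    (hbij.injOn.mono hTE) (IsArcCover.apply_apply_notMem_of_minimal hT hbij.injOn hfix)
  have hTD : T ∪ f '' T ⊆ (L ∪ f '' L)ᶜ :=
    Set.union_subset (hTE.trans hED) ((Set.image_mono hTE).trans hbij.image_eq.subset)
  refine ⟨L ∪ T, L.piecewise c col, (hL.prop.isArcColoring hinj).union_piecewise hcol
    (Set.disjoint_left.2 fun _ hxL hxT => hTD hxT hxL), fun v => ?_⟩
  rw [Set.image_union, Set.union_union_union_comm]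
  refine or_iff_not_imp_left.2 fun hv => ?_
  obtain ⟨x, hx, rfl⟩ := hbij.surjOn hv
  exact (hT.prop.mem_or_apply_mem x hx).elim (fun h => .inr ⟨x, h, rfl⟩) .inl

section Degree

variable {G : SimpleGraph V}

lemma card_le_mul_card_biUnion_neighborFinset [G.LocallyFinite] [DecidableEq V] {k : ℕ}
    (hpos : ∀ v, 0 < G.degree v) (hdeg : ∀ v w, G.Adj v w → G.degree w ≤ k * G.degree v)
    (X : Finset V) : X.card ≤ k * (X.biUnion fun v => G.neighborFinset v).card := by
  have hpos' : ∀ v, (0 : ℚ) < G.degree v := fun v => Nat.cast_pos.2 (hpos v)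
  set Y := X.biUnion fun v => G.neighborFinset v
  have hmem : ∀ v w, v ∈ X ∧ w ∈ G.neighborFinset v ↔ v ∈ X ∩ G.neighborFinset w ∧ w ∈ Y := by
    intro v w
    simp only [Y, Finset.mem_inter, Finset.mem_biUnion, mem_neighborFinset, G.adj_comm w v]
    exact ⟨fun h => ⟨h, v, h⟩, And.left⟩
  have hweight : ∀ w, ∀ v ∈ G.neighborFinset w,
      (G.degree v : ℚ)⁻¹ ≤ k * (G.degree w : ℚ)⁻¹ := by
    intro w v hv
    rw [← div_eq_mul_inv, le_div_iff₀ (hpos' w), inv_mul_le_iff₀ (hpos' v), mul_comm]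
    exact_mod_cast hdeg v w ((mem_neighborFinset G w v).1 hv).symm
  have key : (X.card : ℚ) ≤ k * Y.card := calc
    (X.card : ℚ) = ∑ v ∈ X, ∑ _w ∈ G.neighborFinset v, (G.degree v : ℚ)⁻¹ := by
      simp [(hpos' _).ne']
    _ = ∑ w ∈ Y, ∑ v ∈ X ∩ G.neighborFinset w, (G.degree v : ℚ)⁻¹ := Finset.sum_comm' hmem
    _ ≤ ∑ w ∈ Y, ∑ v ∈ G.neighborFinset w, (G.degree v : ℚ)⁻¹ := by
      gcongr
      exact Finset.inter_subset_right
    _ ≤ ∑ w ∈ Y, ∑ _v ∈ G.neighborFinset w, k * (G.degree w : ℚ)⁻¹ :=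
      Finset.sum_le_sum fun w _ => Finset.sum_le_sum (hweight w)
    _ = k * Y.card := by
      simp [mul_left_comm, (hpos' _).ne', mul_comm]
  exact_mod_cast key

lemma exists_injective_prod_fin_adj [G.LocallyFinite] {k : ℕ}
    (hpos : ∀ v, 0 < G.degree v) (hdeg : ∀ v w, G.Adj v w → G.degree w ≤ k * G.degree v) :
    ∃ F : V → V × Fin k, F.Injective ∧ ∀ v, G.Adj v (F v).1 := by
  classical
  obtain ⟨F, hinj, hF⟩ := (Finset.all_card_le_biUnion_card_iff_exists_injective
    fun v => G.neighborFinset v ×ˢ (Finset.univ : Finset (Fin k))).1 fun X => by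
      have hprod : (X.biUnion fun v => G.neighborFinset v ×ˢ (Finset.univ : Finset (Fin k))) =
          (X.biUnion fun v => G.neighborFinset v) ×ˢ Finset.univ := by
        ext
        simp only [Finset.mem_biUnion, Finset.mem_product, Finset.mem_univ, and_true]
      rw [hprod, Finset.card_product, Finset.card_fin, mul_comm]
      exact card_le_mul_card_biUnion_neighborFinset hpos hdeg X
  exact ⟨F, hinj, fun v => (mem_neighborFinset G v _).1 (Finset.mem_product.1 (hF v)).1⟩

lemma ncard_neighborSet (v : V) [Fintype (G.neighborSet v)] :
    (G.neighborSet v).ncard = G.degree v := by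
  rw [Set.ncard_eq_toFinset_card', ← neighborFinset_def, card_neighborFinset_eq_degree]

lemma minDeg_le_degree (v : V) [Fintype (G.neighborSet v)] : minDeg G ≤ G.degree v :=
  Nat.sInf_le ⟨v, ncard_neighborSet v⟩

lemma degree_le_maxDeg [Finite V] (v : V) [Fintype (G.neighborSet v)] : G.degree v ≤ maxDeg G :=
  le_csSup (Set.finite_range _).bddAbove ⟨v, ncard_neighborSet v⟩

lemma degree_le_two_mul_degree_of_maxDeg_sub_minDeg_le_one [Finite V] [G.LocallyFinite]
    (halmost : maxDeg G - minDeg G ≤ 1) {v : V} (hv : 0 < G.degree v) (w : V) :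
    G.degree w ≤ 2 * G.degree v := by
  have hmin := minDeg_le_degree (G := G) v
  have hmax := degree_le_maxDeg (G := G) w
  omega

end Degree

theorem almostRegular_sp_le_two_general (G : SimpleGraph V) [G.LocallyFinite] {k : ℕ} (hk : 2 ≤ k)
    (hG : ∀ v : V, ∃ w : V, G.Adj v w)
    (hdeg : ∀ v w, G.Adj v w → G.degree w ≤ k * G.degree v) : sp G ≤ k := by
  have : Nontrivial (Fin k) := Fin.nontrivial_iff_two_le.2 hk
  obtain ⟨F, hinj, hadj⟩ :=
    exists_injective_prod_fin_adj (fun v => (G.degree_pos_iff_exists_adj v).2 (hG v)) hdeg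
  obtain ⟨T, col, hcol, hcover⟩ := exists_isArcColoring_cover hinj fun v => (hadj v).ne'
  exact Nat.sInf_le (hcol.exists_spanningSub_edgeColorable hadj hcover)

/-- For any almost regular graph (`Δ(G) - δ(G) ≤ 1`) without isolated vertices, `sp(G) ≤ 2`. -/
theorem almostRegular_sp_le_two {V : Type*} [Fintype V] (G : SimpleGraph V)
    (hG : ∀ v : V, ∃ w : V, G.Adj v w) (halmost : maxDeg G - minDeg G ≤ 1) :
    sp G ≤ 2 := by
  classical
  exact almostRegular_sp_le_two_general G le_rfl hG fun v w _ =>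
    degree_le_two_mul_degree_of_maxDeg_sub_minDeg_le_one halmost
      ((G.degree_pos_iff_exists_adj v).2 (hG v)) w
end

section
/- For any positive integers a and b, there exists a tree G (without isolated vertices) such that sp(G) > a · (|V(G)|/ν(G))^b. -/
open SimpleGraph

variable {V : Type*}

/-!
The tree is a broom: a path of length `2k` with `k` leaves attached to one of its ends. It has
`3k + 1` vertices, and alternate edges of the path form a matching of size `k`, so
`|V| / ν ≤ 4` however large `k` is. A spanning subgraph must contain all `k` leaf edges; they share
a vertex, so `sp ≥ k`.
-/

section Sp

variable {G : SimpleGraph V}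

theorem edgeColorable_card_edgeSet (H : G.Subgraph) [Finite H.edgeSet] :
    EdgeColorable H (Nat.card H.edgeSet) :=
  ⟨Finite.equivFin _, fun _ _ hne _ => (Finite.equivFin _).injective.ne hne⟩

theorem EdgeColorable.ncard_neighborSet_le {H : G.Subgraph} {k : ℕ} (hH : EdgeColorable H k)
    (c : V) : (H.neighborSet c).ncard ≤ k := by
  obtain ⟨f, hf⟩ := hH
  have hinj : Function.Injective fun w : H.neighborSet c => f ⟨s(c, w), w.2⟩ := by
    intro w w' hww'
    by_contra hne
    refine hf ⟨s(c, w), w.2⟩ ⟨s(c, w'), w'.2⟩ ?_ ⟨c, by simp, by simp⟩ hww'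
    exact fun h => hne (Subtype.ext (Sym2.congr_right.1 (congrArg Subtype.val h)))
  simpa using Nat.card_le_card_of_injective _ hinj

theorem exists_spanningSub_edgeColorable_sp [Finite V] (hG : ∀ v, ∃ w, G.Adj v w) :
    ∃ H : G.Subgraph, SpanningSub H ∧ EdgeColorable H (sp G) :=
  Nat.sInf_mem (s := {k | ∃ H : G.Subgraph, SpanningSub H ∧ EdgeColorable H k})
    ⟨_, ⊤, hG, edgeColorable_card_edgeSet ⊤⟩

theorem ncard_leaves_le_sp [Finite V] (hG : ∀ v, ∃ w, G.Adj v w) {c : V} {S : Set V}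
    (hS : ∀ v ∈ S, ∀ w, G.Adj v w → w = c) : S.ncard ≤ sp G := by
  obtain ⟨H, hspan, hcol⟩ := exists_spanningSub_edgeColorable_sp hG
  have hsub : S ⊆ H.neighborSet c := by
    intro v hv
    obtain ⟨w, hvw⟩ := hspan v
    obtain rfl := hS v hv w hvw.adj_sub
    exact hvw.symm
  exact (Set.ncard_le_ncard hsub).trans (hcol.ncard_neighborSet_le c)

end Sp

section MatchNum

variable [Finite V] {G : SimpleGraph V}

theorem ncard_edgeSet_le_matchNum {M : G.Subgraph} (hM : M.IsMatching) :
    M.edgeSet.ncard ≤ matchNum G := by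
  refine le_csSup ⟨G.edgeSet.ncard, ?_⟩ ⟨M, hM, rfl⟩
  rintro _ ⟨M', -, rfl⟩
  exact Set.ncard_le_ncard M'.edgeSet_subset

theorem card_le_matchNum_of_adj {ι : Type*} {x y : ι → V} (hxy : (Sum.elim x y).Injective)
    (hadj : ∀ i, G.Adj (x i) (y i)) : Nat.card ι ≤ matchNum G := by
  obtain ⟨hx, hy, hne⟩ := Sum.elim_injective.1 hxy
  let M : G.Subgraph := ⨆ i, G.subgraphOfAdj (hadj i)
  have hM : M.IsMatching := by
    refine Subgraph.IsMatching.iSup (fun i => .subgraphOfAdj (hadj i)) fun i j hij => ?_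
    simp [support_subgraphOfAdj, hx.ne hij.symm, hy.ne hij.symm, hne, (hne _ _).symm]
  have hedges : M.edgeSet = Set.range fun i => s(x i, y i) := by
    simp [M, Subgraph.edgeSet_iSup, edgeSet_subgraphOfAdj, Set.iUnion_singleton_eq_range]
  have hinj : Function.Injective fun i => s(x i, y i) := by
    intro i j hij
    rcases Sym2.eq_iff.1 hij with ⟨h, -⟩ | ⟨h, -⟩
    · exact hx h
    · exact (hne i j h).elim
  calc Nat.card ι = M.edgeSet.ncard := by rw [hedges, Set.ncard_range_of_injective hinj]
    _ ≤ matchNum G := ncard_edgeSet_le_matchNum hM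

end MatchNum

section FunctionalGraph

/-- The functional graph of `p`, in which every vertex `v` is joined to `p v`. It presents a rooted
tree by its parent map; a fixed point of `p`, such as the root, contributes no edge. -/
def functionalGraph (p : V → V) : SimpleGraph V :=
  fromRel fun u v => p u = v

variable {p : V → V}

theorem functionalGraph_adj {u v : V} :
    (functionalGraph p).Adj u v ↔ u ≠ v ∧ (p u = v ∨ p v = u) :=
  Iff.rfl

theorem edgeSet_functionalGraph_subset {r : V} (hr : p r = r) :
    (functionalGraph p).edgeSet ⊆ (fun v => s(v, p v)) '' {r}ᶜ := by
  intro e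
  induction e using Sym2.ind with | _ u v
  intro h
  obtain ⟨hne, rfl | rfl⟩ := functionalGraph_adj.1 ((mem_edgeSet _).1 h)
  · exact ⟨u, by rintro rfl; exact hne hr.symm, rfl⟩
  · exact ⟨v, by rintro rfl; exact hne hr, Sym2.eq_swap⟩

variable [Preorder V] [OrderBot V]

theorem functionalGraph_connected [WellFoundedLT V] (hp : ∀ v ≠ ⊥, p v < v) :
    (functionalGraph p).Connected := by
  refine (connected_iff_exists_forall_reachable _).2 ⟨⊥, fun v => ?_⟩
  induction v using WellFoundedLT.induction with | _ v ih
  obtain rfl | hv := eq_or_ne v ⊥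
  · rfl
  · have hadj : (functionalGraph p).Adj (p v) v := functionalGraph_adj.2 ⟨(hp v hv).ne, .inr rfl⟩
    exact (ih _ (hp v hv)).trans hadj.reachable

theorem functionalGraph_isTree [Finite V] (hbot : p ⊥ = ⊥) (hp : ∀ v ≠ ⊥, p v < v) :
    (functionalGraph p).IsTree := by
  have hconn := functionalGraph_connected hp
  refine isTree_iff_connected_and_card.2
    ⟨hconn, le_antisymm ?_ hconn.card_vert_le_card_edgeSet_add_one⟩
  calc Nat.card (functionalGraph p).edgeSet + 1
      ≤ ({⊥}ᶜ : Set V).ncard + 1 := by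
        rw [Nat.card_coe_set_eq]
        gcongr
        exact (Set.ncard_le_ncard (edgeSet_functionalGraph_subset hbot)).trans Set.ncard_image_le
    _ = Nat.card V := by
        rw [← Set.ncard_singleton (⊥ : V), Set.ncard_compl_add_ncard]

end FunctionalGraph

section Broom

/-- The parent map of the broom: `0, 1, …, m` is a path rooted at `0`, and the `n` vertices above
`m` are children of `0`. The truncated subtraction makes the root `0` its own parent. -/
def broomParent (m n : ℕ) (v : Fin (m + n + 1)) : Fin (m + n + 1) :=
  if (v : ℕ) ≤ m then ⟨v - 1, by omega⟩ else 0

/-- The broom: a path of length `m` with `n` further leaves attached to its end `0`. -/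
def broom (m n : ℕ) : SimpleGraph (Fin (m + n + 1)) :=
  functionalGraph (broomParent m n)

variable {m n : ℕ}

theorem val_broomParent (v : Fin (m + n + 1)) :
    (broomParent m n v : ℕ) = if (v : ℕ) ≤ m then (v : ℕ) - 1 else 0 := by
  unfold broomParent
  split_ifs <;> rfl

theorem broom_isTree (m n : ℕ) : (broom m n).IsTree := by
  refine functionalGraph_isTree (Fin.ext ?_) fun v hv => ?_
  · simp [val_broomParent, bot_eq_zero]
  · have hv0 : (v : ℕ) ≠ 0 := Fin.val_ne_zero_iff.2 hv
    rw [Fin.lt_def, val_broomParent]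
    split_ifs <;> omega

theorem exists_broom_adj (h : 0 < m + n) (v : Fin (m + n + 1)) : ∃ w, (broom m n).Adj v w := by
  have : Nontrivial (Fin (m + n + 1)) := Fin.nontrivial_iff_two_le.2 (by omega)
  exact (broom_isTree m n).connected.preconnected.exists_adj_of_nontrivial v

theorem half_le_matchNum_broom (m n : ℕ) : (m + 1) / 2 ≤ matchNum (broom m n) := by
  let x (i : Fin ((m + 1) / 2)) : Fin (m + n + 1) := ⟨2 * i, by omega⟩
  let y (i : Fin ((m + 1) / 2)) : Fin (m + n + 1) := ⟨2 * i + 1, by omega⟩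
  have hxy : (Sum.elim x y).Injective := by
    refine Sum.elim_injective.2 ⟨fun i j h => ?_, fun i j h => ?_, fun i j h => ?_⟩ <;>
      simp only [x, y, Fin.mk.injEq] at h <;> omega
  have hadj (i) : (broom m n).Adj (x i) (y i) := by
    refine functionalGraph_adj.2 ⟨by simp [x, y], .inr (Fin.ext ?_)⟩
    rw [val_broomParent, if_pos (by simp only [y]; omega)]
    simp [x, y]
  simpa using card_le_matchNum_of_adj hxy hadj

theorem eq_zero_of_broom_adj_of_lt {v w : Fin (m + n + 1)} (hv : m < v)
    (hvw : (broom m n).Adj v w) : w = 0 := by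
  rcases (functionalGraph_adj.1 hvw).2 with rfl | rfl
  · exact if_neg hv.not_ge
  · rw [val_broomParent] at hv
    split_ifs at hv <;> omega

theorem le_sp_broom (m n : ℕ) : n ≤ sp (broom m n) := by
  obtain rfl | hn := n.eq_zero_or_pos
  · exact Nat.zero_le _
  have hcard : (Set.Ioi (⟨m, by omega⟩ : Fin (m + n + 1))).ncard = n := by
    rw [Set.ncard_eq_toFinset_card', Set.toFinset_Ioi, Fin.card_Ioi]
    dsimp only
    omega
  calc n = _ := hcard.symm
    _ ≤ sp (broom m n) :=
      ncard_leaves_le_sp (exists_broom_adj (by omega)) fun v hv w => eq_zero_of_broom_adj_of_lt hv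

end Broom

/-- For any positive integers `a` and `b`, there is a tree `G` (without isolated vertices)
with `sp(G) > a * (|V(G)| / ν(G))^b`. -/
theorem exists_tree_sp_gt {a b : ℕ} (ha : 0 < a) (hb : 0 < b) :
    ∃ (n : ℕ) (G : SimpleGraph (Fin n)), G.IsTree ∧ (∀ v, ∃ w, G.Adj v w) ∧
      (a : ℚ) * ((Fintype.card (Fin n) : ℚ) / (matchNum G : ℚ)) ^ b < (sp G : ℚ) := by
  obtain ⟨k, hk⟩ : ∃ k, k = a * 4 ^ b + 1 := ⟨_, rfl⟩
  refine ⟨_, broom (2 * k) k, broom_isTree _ _, exists_broom_adj (by omega), ?_⟩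
  have hcard : 2 * k + k + 1 ≤ 4 * matchNum (broom (2 * k) k) := by
    have hmatch := half_le_matchNum_broom (2 * k) k
    omega
  have hratio : (Fintype.card (Fin (2 * k + k + 1)) : ℚ) / matchNum (broom (2 * k) k) ≤ 4 := by
    rw [Fintype.card_fin]
    exact div_le_of_le_mul₀ (by positivity) (by norm_num) (by exact_mod_cast hcard)
  calc (a : ℚ) * ((Fintype.card (Fin (2 * k + k + 1)) : ℚ) / matchNum (broom (2 * k) k)) ^ b
      ≤ a * 4 ^ b := by gcongr
    _ < k := by rw [hk]; exact_mod_cast Nat.lt_succ_self _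
    _ ≤ sp (broom (2 * k) k) := by exact_mod_cast le_sp_broom (2 * k) k
end
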